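/- arXiv:2111.09702 — 2 statements merged into one kernel-verified Lean document; each statement's English description precedes it below -/
import Mathlib

section
/- For every n ≥ 1, any set of fewer than ⌈n/2⌉ lines fails to intersect all cells of the n × n chessboard; consequently h_n = ⌈n/2⌉, where h_n is the minimum number of lines hitting all cells. -/
open scoped Classical

/-- The closed cell `c i j` (indices in `{1,…,n}`) of the `n × n` chessboard on `[-1,1]²`. -/
def cell (n i j : ℕ) : Set (ℝ × ℝ) :=
  Set.Icc (-1 + ((i : ℝ) - 1) * (2 / n)) (-1 + (i : ℝ) * (2 / n)) ×ˢ
    Set.Icc (-1 + ((j : ℝ) - 1) * (2 / n)) (-1 + (j : ℝ) * (2 / n))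

/-- A subset of the plane is a line. -/
def IsLine (L : Set (ℝ × ℝ)) : Prop :=
  ∃ a b c : ℝ, (a, b) ≠ (0, 0) ∧ L = {p : ℝ × ℝ | a * p.1 + b * p.2 = c}

/-- A line pierces a cell if it meets its interior. -/
def Pierces (L s : Set (ℝ × ℝ)) : Prop := (L ∩ interior s).Nonempty

/-- The index set `{1,…,n} × {1,…,n}`. -/
def Idx (n : ℕ) : Finset (ℕ × ℕ) := Finset.Icc 1 n ×ˢ Finset.Icc 1 n

/-- Bang's sign lemma. -/
theorem bang_lemma {ι : Type} [Fintype ι] (B : ι → ι → ℝ) (hB : ∀ i j, B i j = B j i)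
    (ω c : ι → ℝ) (hω : ∀ i, 0 < ω i) :
    ∃ v : ι → ℝ, (∀ i, |v i| = ω i) ∧ ∀ k, ω k * B k k ≤ |∑ j, B k j * v j - c k| := by
  let S : Finset (ι → ℝ) := Fintype.piFinset (fun i => ({ω i, -ω i} : Finset ℝ))
  have hS : ∀ v, v ∈ S ↔ ∀ i, v i = ω i ∨ v i = -ω i := by
    intro v; simp [S, Fintype.mem_piFinset]
  have hne : S.Nonempty := ⟨ω, (hS _).2 fun i => Or.inl rfl⟩
  let Q : (ι → ℝ) → ℝ := fun v => ∑ i, v i * ∑ j, B i j * v j - 2 * ∑ i, c i * v i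
  obtain ⟨v, hv, hmax⟩ := S.exists_max_image Q hne
  have hv' := (hS v).1 hv
  have habs : ∀ i, |v i| = ω i := by
    intro i
    rcases hv' i with h | h <;> simp [h, abs_of_pos (hω i)]
  refine ⟨v, habs, fun k => ?_⟩
  have key : ∀ h : ℝ, Q (fun i => v i + h * (if i = k then 1 else 0)) =
      Q v + 2 * h * (∑ j, B k j * v j) + h ^ 2 * B k k - 2 * h * c k := by
    intro h
    have e1 : ∀ i, ∑ j, B i j * (v j + h * (if j = k then 1 else 0)) =
        ∑ j, B i j * v j + h * B i k := by
      intro i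
      simp only [mul_add, Finset.sum_add_distrib]
      congr 1
      simp [mul_comm]
    have e2 : ∑ i, v i * B i k = ∑ j, B k j * v j :=
      Finset.sum_congr rfl fun i _ => by rw [hB i k]; ring
    have e3 : ∑ i, (v i + h * (if i = k then 1 else 0)) * (∑ j, B i j * v j + h * B i k) =
        ∑ i, v i * ∑ j, B i j * v j + h * ∑ i, v i * B i k
          + h * (∑ j, B k j * v j + h * B k k) := by
      simp only [add_mul, mul_add, Finset.sum_add_distrib, Finset.mul_sum]
      simp [mul_assoc, Finset.mul_sum, mul_left_comm]
      try ring
    have e4 : ∑ i, c i * (v i + h * (if i = k then 1 else 0)) = ∑ i, c i * v i + h * c k := by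
      simp only [mul_add, Finset.sum_add_distrib]
      congr 1
      simp [mul_comm]
    simp only [Q]
    simp only [e1]
    rw [e3, e4, e2]
    ring
  have h1 := hmax (fun i => v i + (-2 * v k) * (if i = k then 1 else 0)) ((hS _).2 (by
    intro i
    by_cases hik : i = k
    · subst hik
      rcases hv' i with h | h
      · right; simp [h]; ring
      · left; simp [h]; ring
    · simpa [hik] using hv' i))
  rw [key] at h1
  set X := ∑ j, B k j * v j
  have h2 : v k ^ 2 * B k k ≤ v k * (X - c k) := by nlinarith
  have h3 : v k * (X - c k) ≤ ω k * |X - c k| := by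
    rw [← habs k, ← abs_mul]; exact le_abs_self _
  have h4 : v k ^ 2 = ω k ^ 2 := by rw [← habs k, sq_abs]
  rw [h4] at h2
  have h5 : ω k * (ω k * B k k) ≤ ω k * |X - c k| := by nlinarith
  exact le_of_mul_le_mul_left h5 (hω k)

theorem D_pos {r t : ℝ} (hr : |r| ≤ 1) (ht : |t| < 1) : 0 < 1 - 2 * r * t + t ^ 2 := by
  have h1 : r * t ≤ |t| := by
    calc r * t ≤ |r * t| := le_abs_self _
      _ = |r| * |t| := abs_mul _ _
      _ ≤ 1 * |t| := by gcongr
      _ = |t| := one_mul _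
  have h2 : 0 < (1 - |t|) ^ 2 := by
    have : 0 < 1 - |t| := by linarith
    positivity
  have h3 := sq_abs t
  nlinarith

theorem exists_r {ι : Type} [Fintype ι] [Nonempty ι] (t : ι → ℝ) (ht : ∀ i, |t i| < 1) :
    ∃ r : ℝ, -1 < r ∧ r < 1 ∧
      ∑ i, t i * (1 - r ^ 2) / (1 - 2 * r * t i + t i ^ 2) = Fintype.card ι * r := by
  let G : ℝ → ℝ := fun r => Fintype.card ι * r -
    ∑ i, t i * (1 - r ^ 2) / (1 - 2 * r * t i + t i ^ 2)
  have hc : ContinuousOn G (Set.Icc (-1) 1) := by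
    refine ContinuousOn.sub (by fun_prop) (continuousOn_finsetSum _ fun i _ => ?_)
    refine ContinuousOn.div (by fun_prop) (by fun_prop) fun r hr => ?_
    exact (D_pos (abs_le.2 hr) (ht i)).ne'
  have hm : (0 : ℝ) < Fintype.card ι := by exact_mod_cast Fintype.card_pos
  have g1 : G (-1) = -Fintype.card ι := by simp [G]
  have g2 : G 1 = Fintype.card ι := by simp [G]
  obtain ⟨r, hr, hGr⟩ := intermediate_value_Icc (by norm_num : (-1 : ℝ) ≤ 1) hc
    (show (0 : ℝ) ∈ Set.Icc (G (-1)) (G 1) by rw [g1, g2]; constructor <;> linarith)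
  refine ⟨r, lt_of_le_of_ne hr.1 ?_, lt_of_le_of_ne hr.2 ?_, ?_⟩
  · rintro rfl; rw [g1] at hGr; linarith
  · rintro rfl; rw [g2] at hGr; linarith
  · simp only [G] at hGr; linarith

/-- The plank theorem in the rotated `ℓ∞` plane. -/
theorem plank {ι : Type} [Fintype ι] (p q c : ι → ℝ)
    (hpq : ∀ i, (p i = 1 ∧ |q i| < 1) ∨ (q i = 1 ∧ |p i| < 1))
    (w : ℝ) (hw : 0 < w) (hcard : Fintype.card ι * w ≤ 1) :
    ∃ α β : ℝ, |α + β| ≤ 1 ∧ |α - β| ≤ 1 ∧ ∀ i, w ≤ |p i * α + q i * β - c i| := by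
  rcases isEmpty_or_nonempty ι with he | hne
  · exact ⟨0, 0, by simp, by simp, fun i => he.elim i⟩
  let t : ι → ℝ := fun i => p i * q i
  have ht : ∀ i, |t i| < 1 := by
    intro i; rcases hpq i with ⟨h, h'⟩ | ⟨h, h'⟩ <;> simpa [t, h] using h'
  obtain ⟨r, hr1, hr2, hsum⟩ := exists_r t ht
  set m : ℝ := (Fintype.card ι : ℝ) with hm
  let D : ι → ℝ := fun i => 1 - 2 * r * t i + t i ^ 2
  have hD : ∀ i, 0 < D i := fun i => D_pos (abs_le.2 ⟨hr1.le, hr2.le⟩) (ht i)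
  have hr3 : 0 < 1 - r := by linarith
  have hr4 : 0 < 1 + r := by linarith
  have hDr : ∀ i, 1 - r ^ 2 ≤ D i := by
    intro i; simp only [D]; nlinarith [sq_nonneg (t i - r)]
  have hT : (1 - r ^ 2) * ∑ i, t i / D i = m * r := by
    rw [← hsum, Finset.mul_sum]
    exact Finset.sum_congr rfl fun i _ => by simp only [D]; ring
  have hI : (1 - r ^ 2) * ∑ i, 1 / D i ≤ m := by
    rw [Finset.mul_sum]
    calc ∑ i, (1 - r ^ 2) * (1 / D i) ≤ ∑ _i : ι, (1 : ℝ) := by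
          refine Finset.sum_le_sum fun i _ => ?_
          rw [mul_one_div, div_le_one (hD i)]; exact hDr i
      _ = m := by simp [hm]
  obtain ⟨v, hv, hbang⟩ := bang_lemma
    (fun i j => p i * (p j - r * q j) + q i * (q j - r * p j)) (fun i j => by ring)
    (fun i => w / D i) c (fun i => div_pos hw (hD i))
  refine ⟨∑ j, v j * (p j - r * q j), ∑ j, v j * (q j - r * p j), ?_, ?_, ?_⟩
  · rw [← Finset.sum_add_distrib]
    have h1 : ∀ j, |v j * (p j - r * q j) + v j * (q j - r * p j)| =
        w * (1 - r) * (1 / D j + t j / D j) := by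
      intro j
      have e : v j * (p j - r * q j) + v j * (q j - r * p j) = v j * ((1 - r) * (1 + t j)) := by
        rcases hpq j with ⟨h, h'⟩ | ⟨h, h'⟩ <;> simp only [t, h] <;> ring
      have := (abs_lt.1 (ht j)).1
      rw [e, abs_mul, hv, abs_of_nonneg (mul_nonneg hr3.le (by linarith))]
      ring
    refine (Finset.abs_sum_le_sum_abs _ _).trans ?_
    simp only [h1]
    rw [← Finset.mul_sum, Finset.sum_add_distrib]
    have h2 : (1 - r) * (∑ i, 1 / D i + ∑ i, t i / D i) ≤ m := by
      refine le_of_mul_le_mul_left (a := 1 + r) ?_ hr4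
      nlinarith
    nlinarith
  · rw [← Finset.sum_sub_distrib]
    have h1 : ∀ j, |v j * (p j - r * q j) - v j * (q j - r * p j)| =
        w * (1 + r) * (1 / D j - t j / D j) := by
      intro j
      have h0 := (abs_lt.1 (ht j)).2
      have e : |v j * (p j - r * q j) - v j * (q j - r * p j)| =
          |v j * ((1 + r) * (1 - t j))| := by
        rcases hpq j with ⟨h, h'⟩ | ⟨h, h'⟩
        · simp only [t, h]; congr 1; ring
        · rw [← abs_neg]; simp only [t, h]; congr 1; ring
      rw [e, abs_mul, hv, abs_of_nonneg (mul_nonneg hr4.le (by linarith))]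
      ring
    refine (Finset.abs_sum_le_sum_abs _ _).trans ?_
    simp only [h1]
    rw [← Finset.mul_sum, Finset.sum_sub_distrib]
    have h2 : (1 + r) * (∑ i, 1 / D i - ∑ i, t i / D i) ≤ m := by
      refine le_of_mul_le_mul_left (a := 1 - r) ?_ hr3
      nlinarith
    nlinarith
  · intro k
    have h := hbang k
    have e1 : w / D k * (p k * (p k - r * q k) + q k * (q k - r * p k)) = w := by
      have : p k * (p k - r * q k) + q k * (q k - r * p k) = D k := by
        rcases hpq k with ⟨h, h'⟩ | ⟨h, h'⟩ <;> simp only [D, t, h] <;> ring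
      rw [this, div_mul_cancel₀ _ (hD k).ne']
    have e2 : ∑ j, (p k * (p j - r * q j) + q k * (q j - r * p j)) * v j =
        p k * ∑ j, v j * (p j - r * q j) + q k * ∑ j, v j * (q j - r * p j) := by
      rw [Finset.mul_sum, Finset.mul_sum, ← Finset.sum_add_distrib]
      exact Finset.sum_congr rfl fun j _ => by ring
    simp only [e2] at h
    rwa [e1] at h

/-- Closed version with a strict width condition. -/
theorem plank' {ι : Type} [Fintype ι] (p q c : ι → ℝ)
    (hpq : ∀ i, (p i = 1 ∧ |q i| ≤ 1) ∨ (q i = 1 ∧ |p i| ≤ 1))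
    (w : ℝ) (hw : 0 < w) (hcard : Fintype.card ι * w < 1) :
    ∃ α β : ℝ, |α + β| ≤ 1 ∧ |α - β| ≤ 1 ∧ ∀ i, w < |p i * α + q i * β - c i| := by
  obtain ⟨e, he0, he1, he⟩ : ∃ e : ℝ, 0 < e ∧ e < 1 ∧ Fintype.card ι * (w + 2 * e) ≤ 1 := by
    set m : ℝ := (Fintype.card ι : ℝ)
    have hm : 0 ≤ m := Nat.cast_nonneg _
    refine ⟨(1 - m * w) / (2 * (m + 1)), by apply div_pos <;> linarith, ?_, ?_⟩
    · rw [div_lt_one (by linarith)]; nlinarith [mul_nonneg hm hw.le]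
    · have : m * (w + 2 * ((1 - m * w) / (2 * (m + 1)))) =
        m * w + (1 - m * w) * (m / (m + 1)) := by field_simp
      have h2 : m / (m + 1) ≤ 1 := by rw [div_le_one (by linarith)]; linarith
      rw [this]; nlinarith
  obtain ⟨α, β, h1, h2, h3⟩ := plank
    (fun i => if p i = 1 then 1 else (1 - e) * p i)
    (fun i => if p i = 1 then (1 - e) * q i else 1) c (by
      intro i
      have hlt : ∀ x : ℝ, |x| ≤ 1 → |(1 - e) * x| < 1 := by
        intro x hx
        rw [abs_mul, abs_of_pos (by linarith)]
        nlinarith [abs_nonneg x]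
      by_cases hp : p i = 1
      · left
        simp only [hp, if_true, true_and]
        apply hlt
        rcases hpq i with h | h
        · exact h.2
        · rw [h.1]; simp
      · right
        simp only [hp, if_false, true_and]
        apply hlt
        rcases hpq i with h | h
        · exact absurd h.1 hp
        · exact h.2) (w + 2 * e) (by linarith) he
  refine ⟨α, β, h1, h2, fun i => ?_⟩
  have h4 := h3 i
  have ha : |α| ≤ 1 := by
    rw [abs_le] at *; constructor <;> linarith [h1.1, h1.2, h2.1, h2.2]
  have hb : |β| ≤ 1 := by
    rw [abs_le] at *; constructor <;> linarith [h1.1, h1.2, h2.1, h2.2]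
  have hsmall : ∀ x y : ℝ, |x| ≤ 1 → |y| ≤ 1 → |e * (x * y)| ≤ e := by
    intro x y hx hy
    rw [abs_mul, abs_mul, abs_of_pos he0]
    have : |x| * |y| ≤ 1 := mul_le_one₀ hx (abs_nonneg _) hy
    nlinarith
  by_cases hp : p i = 1
  · have hq : |q i| ≤ 1 := by
      rcases hpq i with h | h
      · exact h.2
      · rw [h.1]; simp
    simp only [hp, if_true] at h4 ⊢
    have : 1 * α + (1 - e) * q i * β - c i = (1 * α + q i * β - c i) - e * (q i * β) := by ring
    rw [this] at h4
    have h5 := abs_sub (1 * α + q i * β - c i) (e * (q i * β))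
    have h6 := hsmall _ _ hq hb
    linarith
  · have hq : q i = 1 ∧ |p i| ≤ 1 := by
      rcases hpq i with h | h
      · exact absurd h.1 hp
      · exact h
    simp only [hp, if_false] at h4
    rw [hq.1]
    have : (1 - e) * p i * α + 1 * β - c i = (p i * α + 1 * β - c i) - e * (p i * α) := by ring
    rw [this] at h4
    have h5 := abs_sub (p i * α + 1 * β - c i) (e * (p i * α))
    have h6 := hsmall _ _ hq.2 ha
    linarith

theorem line_normal {L : Set (ℝ × ℝ)} (hL : IsLine L) :
    ∃ p q c : ℝ, ((p = 1 ∧ |q| ≤ 1) ∨ (q = 1 ∧ |p| ≤ 1)) ∧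
      ∀ α β : ℝ, (α + β, α - β) ∈ L → p * α + q * β = c := by
  obtain ⟨a, b, c, hab, rfl⟩ := hL
  by_cases h : |a - b| ≤ |a + b|
  · have h0 : a + b ≠ 0 := by
      intro h0
      rw [h0, abs_zero] at h
      have h1 : a - b = 0 := abs_eq_zero.1 (le_antisymm h (abs_nonneg _))
      exact hab (Prod.ext (show a = 0 by linarith) (show b = 0 by linarith))
    refine ⟨1, (a - b) / (a + b), c / (a + b), Or.inl ⟨rfl, ?_⟩, ?_⟩
    · rw [abs_div, div_le_one (abs_pos.2 h0)]; exact h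
    · intro α β hm
      simp only [Set.mem_ofPred_eq] at hm
      field_simp
      linarith
  · push Not at h
    have h0 : a - b ≠ 0 := abs_pos.1 (lt_of_le_of_lt (abs_nonneg _) h)
    refine ⟨(a + b) / (a - b), 1, c / (a - b), Or.inr ⟨rfl, ?_⟩, ?_⟩
    · rw [abs_div, div_le_one (abs_pos.2 h0)]; exact h.le
    · intro α β hm
      simp only [Set.mem_ofPred_eq] at hm
      field_simp
      linarith

theorem exists_interval (n : ℕ) (hn : 1 ≤ n) (x : ℝ) (hx : |x| ≤ 1) :
    ∃ i ∈ Finset.Icc 1 n,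
      x ∈ Set.Icc (-1 + ((i : ℝ) - 1) * (2 / n)) (-1 + (i : ℝ) * (2 / n)) := by
  have hn0 : (0 : ℝ) < n := by exact_mod_cast hn
  rw [abs_le] at hx
  have hy0 : 0 ≤ (x + 1) * n / 2 := by
    have : 0 ≤ x + 1 := by linarith
    positivity
  have hyn : (x + 1) * n / 2 ≤ n := by nlinarith
  have hxy : x = -1 + ((x + 1) * n / 2) * (2 / n) := by field_simp; ring
  have h2 : (0 : ℝ) < 2 / n := by positivity
  set y := (x + 1) * n / 2
  by_cases h : y = 0
  · refine ⟨1, by simp [hn], ?_⟩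
    rw [hxy, h]
    constructor
    · simp
    · push_cast; linarith
  · have hy : 0 < y := lt_of_le_of_ne hy0 (Ne.symm h)
    refine ⟨⌈y⌉₊, Finset.mem_Icc.2 ⟨Nat.ceil_pos.2 hy, Nat.ceil_le.2 hyn⟩, ?_⟩
    have h3 := Nat.le_ceil y
    have h4 := Nat.ceil_lt_add_one hy0
    rw [hxy]
    constructor <;> nlinarith

theorem lower (n : ℕ) (hn : 1 ≤ n) (F : Finset (Set (ℝ × ℝ))) (hF : ∀ L ∈ F, IsLine L)
    (hcard : F.card < (n + 1) / 2) :
    ∃ ij ∈ Idx n, ∀ L ∈ F, L ∩ cell n ij.1 ij.2 = ∅ := by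
  have hn0 : (0 : ℝ) < n := by exact_mod_cast hn
  choose p q c hpq hline using fun L : F => line_normal (hF L.1 L.2)
  obtain ⟨α, β, h1, h2, h3⟩ := plank' p q c hpq (2 / n) (by positivity) (by
    rw [Fintype.card_coe, mul_div_assoc', div_lt_one hn0]
    have : F.card * 2 < n := by omega
    exact_mod_cast this)
  obtain ⟨i, hi, hxi⟩ := exists_interval n hn _ h1
  obtain ⟨j, hj, hyj⟩ := exists_interval n hn _ h2
  refine ⟨(i, j), Finset.mem_product.2 ⟨hi, hj⟩, fun L hL => ?_⟩
  rw [Set.eq_empty_iff_forall_notMem]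
  rintro ⟨x, y⟩ ⟨hmL, hmc⟩
  obtain ⟨hx, hy⟩ := Set.mem_prod.1 hmc
  simp only [Set.mem_Icc] at hx hy hxi hyj
  have h4 := h3 ⟨L, hL⟩
  have h5 := hline ⟨L, hL⟩ ((x + y) / 2) ((x - y) / 2) (by
    convert hmL using 2 <;> ring)
  rw [← h5] at h4
  have h6 : |(α + β) - x| ≤ 2 / n := abs_le.2 ⟨by linarith, by linarith⟩
  have h7 : |(α - β) - y| ≤ 2 / n := abs_le.2 ⟨by linarith, by linarith⟩
  set w : ℝ := 2 / n
  set P := p ⟨L, hL⟩ with hP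
  set R := q ⟨L, hL⟩ with hR
  have hlin : P * α + R * β - (P * ((x + y) / 2) + R * ((x - y) / 2)) =
      (P + R) / 2 * ((α + β) - x) + (P - R) / 2 * ((α - β) - y) := by ring
  rw [hlin] at h4
  have hle : |(P + R) / 2| + |(P - R) / 2| ≤ 1 := by
    rcases hpq ⟨L, hL⟩ with ⟨ha, hb⟩ | ⟨ha, hb⟩
    · rw [← hP] at ha
      rw [← hR, abs_le] at hb
      rw [ha, abs_of_nonneg (by linarith), abs_of_nonneg (by linarith)]; linarith
    · rw [← hR] at ha
      rw [← hP, abs_le] at hb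
      rw [ha, abs_of_nonneg (by linarith), abs_of_nonpos (by linarith)]; linarith
  have h8 := abs_add_le ((P + R) / 2 * ((α + β) - x)) ((P - R) / 2 * ((α - β) - y))
  rw [abs_mul, abs_mul] at h8
  have hw : 0 < w := by positivity
  have h9 := mul_le_mul_of_nonneg_left h6 (abs_nonneg ((P + R) / 2))
  have h10 := mul_le_mul_of_nonneg_left h7 (abs_nonneg ((P - R) / 2))
  nlinarith

theorem upper (n : ℕ) (hn : 1 ≤ n) :
    ∃ F : Finset (Set (ℝ × ℝ)), F.card = (n + 1) / 2 ∧ (∀ L ∈ F, IsLine L) ∧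
      ∀ ij ∈ Idx n, ∃ L ∈ F, (L ∩ cell n ij.1 ij.2).Nonempty := by
  have hn0 : (0 : ℝ) < n := by exact_mod_cast hn
  have h2 : (0 : ℝ) < 2 / n := by positivity
  let f : ℕ → Set (ℝ × ℝ) := fun k => {z | 1 * z.1 + 0 * z.2 = -1 + (2 * (k : ℝ) + 1) * (2 / n)}
  have hf : Function.Injective f := by
    intro k l h
    have hk : ((-1 + (2 * (k : ℝ) + 1) * (2 / n), 0) : ℝ × ℝ) ∈ f k := by simp [f]
    rw [h] at hk
    simp only [f, Set.mem_ofPred_eq, one_mul, zero_mul, add_zero] at hk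
    have h3 : (2 * (k : ℝ) + 1) * (2 / n) = (2 * (l : ℝ) + 1) * (2 / n) := by linarith
    have h4 := mul_right_cancel₀ h2.ne' h3
    have : (k : ℝ) = l := by linarith
    exact_mod_cast this
  refine ⟨(Finset.range ((n + 1) / 2)).image f, ?_, ?_, ?_⟩
  · rw [Finset.card_image_of_injective _ hf, Finset.card_range]
  · intro L hL
    obtain ⟨k, -, rfl⟩ := Finset.mem_image.1 hL
    exact ⟨1, 0, _, by simp, rfl⟩
  · rintro ⟨i, j⟩ hij
    simp only [Idx, Finset.mem_product, Finset.mem_Icc] at hij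
    obtain ⟨⟨hi1, hi2⟩, hj1, hj2⟩ := hij
    refine ⟨f ((i - 1) / 2), Finset.mem_image_of_mem _ (Finset.mem_range.2 (by omega)), ?_⟩
    refine ⟨(-1 + (2 * (((i - 1) / 2 : ℕ) : ℝ) + 1) * (2 / n), -1 + (j : ℝ) * (2 / n)), ?_, ?_⟩
    · simp [f]
    · have e1 : i ≤ 2 * ((i - 1) / 2) + 1 + 1 := by omega
      have e2 : 2 * ((i - 1) / 2) + 1 ≤ i := by omega
      have e1' : (i : ℝ) ≤ 2 * (((i - 1) / 2 : ℕ) : ℝ) + 1 + 1 := by exact_mod_cast e1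
      have e2' : 2 * (((i - 1) / 2 : ℕ) : ℝ) + 1 ≤ (i : ℝ) := by exact_mod_cast e2
      refine Set.mem_prod.2 ⟨⟨?_, ?_⟩, ⟨?_, ?_⟩⟩ <;> simp only <;> nlinarith

/-- Fewer than `⌈n/2⌉` lines cannot hit all cells; hence `h_n = ⌈n/2⌉`. -/
theorem hitting_eq (n : ℕ) (hn : 1 ≤ n) :
    (∀ F : Finset (Set (ℝ × ℝ)), (∀ L ∈ F, IsLine L) → F.card < (n + 1) / 2 →
      ∃ ij ∈ Idx n, ∀ L ∈ F, L ∩ cell n ij.1 ij.2 = ∅) ∧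
    IsLeast {m : ℕ | ∃ F : Finset (Set (ℝ × ℝ)), F.card = m ∧ (∀ L ∈ F, IsLine L) ∧
      ∀ ij ∈ Idx n, ∃ L ∈ F, (L ∩ cell n ij.1 ij.2).Nonempty} ((n + 1) / 2) := by
  refine ⟨fun F hF hcard => lower n hn F hF hcard, upper n hn, ?_⟩
  rintro m ⟨F, rfl, hF, hhit⟩
  by_contra hlt
  obtain ⟨ij, hij, hmiss⟩ := lower n hn F hF (not_le.1 hlt)
  obtain ⟨L, hL, hne⟩ := hhit ij hij
  exact hne.ne_empty (hmiss L hL)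
end

section
/- For sufficiently large n, p_n > 2n/3 - 1, where p_n is the minimum number of lines piercing all cells of the n × n chessboard. More precisely, for every ε > 0, p_n > (2/3 - ε)n for all sufficiently large n. -/
open scoped Classical

/-- Weight density (an improvement of `μ₁` by an additive constant). -/
noncomputable def wgt (x y : ℝ) : ℝ := 1 / 10 + x ^ 2 + y ^ 2 - 2 * x ^ 2 * y ^ 2

lemma wgt_swap (x y : ℝ) : wgt x y = wgt y x := by unfold wgt; ring

lemma wgt_lip {x y X Y h : ℝ} (hh : 0 ≤ h) (hx : |x| ≤ 2) (hY : |Y| ≤ 2) (hX : |X| ≤ 2)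
    (hy : |y| ≤ 2) (h1 : |X - x| ≤ 2 * h) (h2 : |Y - y| ≤ 2 * h) :
    wgt X Y ≤ wgt x y + 144 * h := by
  have key : wgt X Y - wgt x y =
      (X - x) * ((X + x) * (1 - 2 * Y ^ 2)) + (Y - y) * ((Y + y) * (1 - 2 * x ^ 2)) := by
    unfold wgt; ring
  have aux : ∀ u v z : ℝ, |u| ≤ 2 → |v| ≤ 2 → |z| ≤ 2 → |(u + v) * (1 - 2 * z ^ 2)| ≤ 28 := by
    intro u v z hu hv hz
    rw [abs_mul]
    have a1 : |u + v| ≤ 4 := (abs_add_le u v).trans (by linarith)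
    have a2 : |1 - 2 * z ^ 2| ≤ 7 := by
      rw [abs_le] at hz ⊢
      constructor <;> nlinarith
    calc |u + v| * |1 - 2 * z ^ 2| ≤ 4 * 7 := by gcongr
      _ = 28 := by norm_num
  have b1 : (X - x) * ((X + x) * (1 - 2 * Y ^ 2)) ≤ 2 * h * 28 := by
    refine (le_abs_self _).trans ?_
    rw [abs_mul]
    have := aux X x Y hX hx hY
    gcongr
  have b2 : (Y - y) * ((Y + y) * (1 - 2 * x ^ 2)) ≤ 2 * h * 28 := by
    refine (le_abs_self _).trans ?_
    rw [abs_mul]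
    have := aux Y y x hY hy hx
    gcongr
  linarith

lemma wgt_nonneg {x y : ℝ} (hx : |x| ≤ 1) (hy : |y| ≤ 1) : 0 ≤ wgt x y := by
  have hx2 : x ^ 2 ≤ 1 := (sq_le_one_iff_abs_le_one x).2 hx
  have hy2 : y ^ 2 ≤ 1 := (sq_le_one_iff_abs_le_one y).2 hy
  unfold wgt
  nlinarith [mul_nonneg (sq_nonneg x) (sub_nonneg.2 hy2), mul_nonneg (sq_nonneg y) (sub_nonneg.2 hx2)]

lemma wgt_le {x y : ℝ} (hx : |x| ≤ 2) (hy : |y| ≤ 2) : wgt x y ≤ 9 := by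
  rw [abs_le] at hx hy
  unfold wgt
  nlinarith [mul_nonneg (sq_nonneg x) (sq_nonneg y)]

/-- Closed form of the integral of the weight along a segment. -/
lemma wgt_integral (x y d e a b : ℝ) (x' y' p q : ℝ) (hde : d + e = 1)
    (hx : x + d * a = x') (hy : y + e * a = y') (hp : d * (b - a) = p) (hq : e * (b - a) = q) :
    ∫ s in a..b, wgt (x + d * s) (y + e * s) =
      (p + q) * (1 / 10 + (x' ^ 2 + x' * p + p ^ 2 / 3) + (y' ^ 2 + y' * q + q ^ 2 / 3)
        - 2 * (x' ^ 2 * y' ^ 2 + x' * y' * (x' * q + y' * p)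
          + (x' ^ 2 * q ^ 2 + 4 * x' * y' * p * q + y' ^ 2 * p ^ 2) / 3
          + (x' * p * q ^ 2 + y' * q * p ^ 2) / 2 + p ^ 2 * q ^ 2 / 5)) := by
  have hF : ∀ s ∈ Set.uIcc a b, HasDerivAt (fun s : ℝ =>
      s / 10 + (x ^ 2 * s + x * d * s ^ 2 + d ^ 2 * s ^ 3 / 3)
        + (y ^ 2 * s + y * e * s ^ 2 + e ^ 2 * s ^ 3 / 3)
        - 2 * (x ^ 2 * y ^ 2 * s + x * y * (x * e + y * d) * s ^ 2
          + (x ^ 2 * e ^ 2 + 4 * x * y * d * e + y ^ 2 * d ^ 2) * s ^ 3 / 3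
          + (x * d * e ^ 2 + y * e * d ^ 2) * s ^ 4 / 2 + d ^ 2 * e ^ 2 * s ^ 5 / 5))
      (wgt (x + d * s) (y + e * s)) s := by
    intro s _
    have h1 := hasDerivAt_id' s
    have h2 := hasDerivAt_pow 2 s
    have h3 := hasDerivAt_pow 3 s
    have h4 := hasDerivAt_pow 4 s
    have h5 := hasDerivAt_pow 5 s
    have := (((h1.div_const 10).add (((h1.const_mul (x ^ 2)).add (h2.const_mul (x * d))).add
      ((h3.const_mul (d ^ 2)).div_const 3))).add
      (((h1.const_mul (y ^ 2)).add (h2.const_mul (y * e))).add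
      ((h3.const_mul (e ^ 2)).div_const 3))).sub
      ((((((h1.const_mul (x ^ 2 * y ^ 2)).add (h2.const_mul (x * y * (x * e + y * d)))).add
        ((h3.const_mul (x ^ 2 * e ^ 2 + 4 * x * y * d * e + y ^ 2 * d ^ 2)).div_const 3)).add
        ((h4.const_mul (x * d * e ^ 2 + y * e * d ^ 2)).div_const 2)).add
        ((h5.const_mul (d ^ 2 * e ^ 2)).div_const 5)).const_mul 2)
    refine this.congr_deriv ?_
    unfold wgt
    push_cast
    ring
  rw [intervalIntegral.integral_eq_sub_of_hasDerivAt hF]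
  · have hpq : p + q = b - a := by rw [← hp, ← hq, ← add_mul, hde, one_mul]
    rw [hpq]
    subst hx hy hp hq
    ring
  · apply Continuous.intervalIntegrable
    unfold wgt
    fun_prop

/-- Segments from the left side to the top side. -/
lemma corner_bound {p q : ℝ} (hp : 0 ≤ p) (hq : 0 ≤ q) (hp2 : p ≤ 2) (hq2 : q ≤ 2) :
    (p + q) * (1 / 10 + (p + q) - (p + q) ^ 2 / 3 - 2 * (p * q) / 3 + (p * q) * (p + q) / 3
      - (p * q) ^ 2 / 15) ≤ 81 / 50 := by
  have hr0 : 0 ≤ p * q := mul_nonneg hp hq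
  have hr4 : p * q ≤ 4 := by nlinarith
  have hs0 : 0 ≤ p + q := add_nonneg hp hq
  have hs4 : p + q ≤ 4 := by linarith
  generalize p * q = r at *
  generalize p + q = s at *
  clear hp hq hp2 hq2
  have step : ∀ B : ℝ, (1 / 10 + s - s ^ 2 / 3 - 2 * r / 3 + r * s / 3 - r ^ 2 / 15) ≤ B →
      s * B ≤ 81 / 50 →
      s * (1 / 10 + s - s ^ 2 / 3 - 2 * r / 3 + r * s / 3 - r ^ 2 / 15) ≤ 81 / 50 :=
    fun B h1 h2 => (mul_le_mul_of_nonneg_left h1 hs0).trans h2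
  rcases le_total s 2 with h2 | h2
  · apply step (1 / 10 + s - s ^ 2 / 3)
    · nlinarith [mul_nonneg hr0 (sub_nonneg.2 h2)]
    · nlinarith [mul_nonneg hs0 (sub_nonneg.2 h2), mul_nonneg hs0 (sq_nonneg (s - 2)), mul_nonneg (sub_nonneg.2 h2) (sq_nonneg (s - 2))]
  · rcases le_total s (18 / 5) with h3 | h3
    · apply step (1 / 10 + 5 / 3 - 2 * s / 3 + s ^ 2 / 12)
      · nlinarith [sq_nonneg (r - 5 * (s - 2) / 2)]
      · nlinarith [mul_nonneg (sub_nonneg.2 h3) (sq_nonneg (s - 5 / 2)), mul_nonneg (sub_nonneg.2 h2) (sub_nonneg.2 h3), mul_nonneg (sub_nonneg.2 h3) (sq_nonneg (s - 12 / 5))]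
    · apply step (1 / 10 + s - s ^ 2 / 3 + 4 * (s - 2) / 3 - 16 / 15)
      · nlinarith [sq_nonneg (r - 4), mul_nonneg (sub_nonneg.2 hr4) (sub_nonneg.2 h3)]
      · nlinarith [mul_nonneg (sub_nonneg.2 h3) (sq_nonneg (s - 92 / 25)), sq_nonneg (s - 92 / 25)]

/-- Segments from the left side to the right side. -/
lemma cross_bound {m b : ℝ} (hm : 0 ≤ m) (hm1 : m ≤ 1) (hb : |b| ≤ 1 - m) :
    (1 + m) * (2 / 10 + 2 / 3 - 2 * m ^ 2 / 15 + 2 * b ^ 2 / 3) ≤ 81 / 50 := by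
  have hb2 : b ^ 2 ≤ (1 - m) ^ 2 := by
    rw [← sq_abs b]
    exact pow_le_pow_left₀ (abs_nonneg b) hb 2
  have : (1 + m) * (2 / 10 + 2 / 3 - 2 * m ^ 2 / 15 + 2 * b ^ 2 / 3) ≤
      (1 + m) * (2 / 10 + 2 / 3 - 2 * m ^ 2 / 15 + 2 * (1 - m) ^ 2 / 3) := by
    gcongr
  refine this.trans ?_
  nlinarith [mul_nonneg hm (sub_nonneg.2 hm1), mul_nonneg (mul_nonneg hm hm) (sub_nonneg.2 hm1), sq_nonneg (m - 1 / 5)]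

/-- Integral bound, line entering through the left side. -/
lemma left_bound (x y d e a b : ℝ) (hd : 0 ≤ d) (he : 0 ≤ e) (hde : d + e = 1) (hab : a ≤ b)
    (hxa : x + d * a = -1) (hya : -1 ≤ y + e * a) (hxb : x + d * b ≤ 1) (hyb : y + e * b ≤ 1)
    (hor : x + d * b = 1 ∨ y + e * b = 1) :
    ∫ s in a..b, wgt (x + d * s) (y + e * s) ≤ 81 / 50 := by
  have hp0 : 0 ≤ d * (b - a) := mul_nonneg hd (by linarith)
  have hq0 : 0 ≤ e * (b - a) := mul_nonneg he (by linarith)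
  rcases hor with hor | hor
  · have hp : d * (b - a) = 2 := by linarith
    rw [wgt_integral x y d e a b (-1) (y + e * a) 2 (e * (b - a)) hde hxa rfl hp rfl]
    have hz : y + e * b = y + e * a + e * (b - a) := by ring
    rw [hz] at hyb
    generalize y + e * a = z at *
    generalize e * (b - a) = q at *
    have := cross_bound (m := q / 2) (b := z + q / 2) (by linarith) (by linarith)
      (by rw [abs_le]; constructor <;> linarith)
    refine le_of_eq_of_le ?_ this
    ring
  · have hy' : y + e * a = 1 - e * (b - a) := by linarith
    rw [wgt_integral x y d e a b (-1) (1 - e * (b - a)) (d * (b - a)) (e * (b - a)) hde hxa hy' rfl rfl]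
    have hq2 : e * (b - a) ≤ 2 := by linarith
    have hp2 : d * (b - a) ≤ 2 := by linarith
    generalize e * (b - a) = q at *
    generalize d * (b - a) = p at *
    refine le_of_eq_of_le ?_ (corner_bound hp0 hq0 hp2 hq2)
    ring

lemma segment_bound (x y d e : ℝ) (hd : 0 ≤ d) (he : 0 ≤ e) (hde : d + e = 1)
    (hx : |x| < 1) (hy : |y| < 1) :
    ∃ a b : ℝ, a ≤ b ∧ |x + d * a| ≤ 1 ∧ |y + e * a| ≤ 1 ∧ |x + d * b| ≤ 1 ∧ |y + e * b| ≤ 1 ∧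
      (∀ s, |x + d * s| ≤ 1 → |y + e * s| ≤ 1 → a ≤ s ∧ s ≤ b) ∧
      ∫ s in a..b, wgt (x + d * s) (y + e * s) ≤ 81 / 50 := by
  rw [abs_lt] at hx hy
  obtain ⟨hx1, hx2⟩ := hx
  obtain ⟨hy1, hy2⟩ := hy
  have hB : ∃ b, 0 ≤ b ∧ x + d * b ≤ 1 ∧ y + e * b ≤ 1 ∧
      ((x + d * b = 1 ∧ 0 < d) ∨ (y + e * b = 1 ∧ 0 < e)) := by
    rcases le_or_gt ((1 - x) * e) ((1 - y) * d) with h | h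
    · have hd' : 0 < d := by
        rcases hd.eq_or_lt with h0 | h0
        · exfalso; subst h0; nlinarith
        · exact h0
      have hb : d * ((1 - x) / d) = 1 - x := by field_simp
      refine ⟨(1 - x) / d, div_nonneg (by linarith) hd, by linarith, ?_, Or.inl ⟨by linarith, hd'⟩⟩
      have : e * ((1 - x) / d) ≤ 1 - y := by
        rw [mul_div_assoc', div_le_iff₀ hd']; linarith
      linarith
    · have he' : 0 < e := by
        rcases he.eq_or_lt with h0 | h0
        · exfalso; subst h0; nlinarith
        · exact h0
      have hb : e * ((1 - y) / e) = 1 - y := by field_simp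
      refine ⟨(1 - y) / e, div_nonneg (by linarith) he, ?_, by linarith, Or.inr ⟨by linarith, he'⟩⟩
      have : d * ((1 - y) / e) ≤ 1 - x := by
        rw [mul_div_assoc', div_le_iff₀ he']; linarith
      linarith
  have hA : ∃ a, a ≤ 0 ∧ -1 ≤ x + d * a ∧ -1 ≤ y + e * a ∧
      ((x + d * a = -1 ∧ 0 < d) ∨ (y + e * a = -1 ∧ 0 < e)) := by
    rcases le_or_gt ((1 + x) * e) ((1 + y) * d) with h | h
    · have hd' : 0 < d := by
        rcases hd.eq_or_lt with h0 | h0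
        · exfalso; subst h0; nlinarith
        · exact h0
      have hb : d * (-((1 + x) / d)) = -(1 + x) := by field_simp
      have h0 : 0 ≤ (1 + x) / d := div_nonneg (by linarith) hd
      refine ⟨-((1 + x) / d), by linarith, by linarith, ?_, Or.inl ⟨by linarith, hd'⟩⟩
      have : e * ((1 + x) / d) ≤ 1 + y := by
        rw [mul_div_assoc', div_le_iff₀ hd']; linarith
      linarith
    · have he' : 0 < e := by
        rcases he.eq_or_lt with h0 | h0
        · exfalso; subst h0; nlinarith
        · exact h0
      have hb : e * (-((1 + y) / e)) = -(1 + y) := by field_simp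
      have h0 : 0 ≤ (1 + y) / e := div_nonneg (by linarith) he
      refine ⟨-((1 + y) / e), by linarith, ?_, by linarith, Or.inr ⟨by linarith, he'⟩⟩
      have : d * ((1 + y) / e) ≤ 1 + x := by
        rw [mul_div_assoc', div_le_iff₀ he']; linarith
      linarith
  obtain ⟨b, hb0, hxb, hyb, hbor⟩ := hB
  obtain ⟨a, ha0, hxa, hya, haor⟩ := hA
  have hdb := mul_nonneg hd hb0
  have heb := mul_nonneg he hb0
  have hda := mul_nonneg hd (neg_nonneg.2 ha0)
  have hea := mul_nonneg he (neg_nonneg.2 ha0)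
  refine ⟨a, b, by linarith, abs_le.2 ⟨by linarith, by linarith⟩, abs_le.2 ⟨by linarith, by linarith⟩,
    abs_le.2 ⟨by linarith, by linarith⟩, abs_le.2 ⟨by linarith, by linarith⟩, ?_, ?_⟩
  · intro s hs1 hs2
    rw [abs_le] at hs1 hs2
    constructor
    · rcases haor with ⟨h1, h2⟩ | ⟨h1, h2⟩
      · exact le_of_mul_le_mul_left (by linarith) h2
      · exact le_of_mul_le_mul_left (by linarith) h2
    · rcases hbor with ⟨h1, h2⟩ | ⟨h1, h2⟩
      · exact le_of_mul_le_mul_left (by linarith) h2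
      · exact le_of_mul_le_mul_left (by linarith) h2
  · rcases haor with ⟨h1, h2⟩ | ⟨h1, h2⟩
    · exact left_bound x y d e a b hd he hde (by linarith) h1 hya hxb hyb
        (hbor.imp And.left And.left)
    · simp_rw [wgt_swap (x + d * _)]
      exact left_bound y x e d a b he hd (by linarith) (by linarith) h1 hxa hyb hxb
        (hbor.symm.imp And.left And.left)

/-- Discretisation: sum of weights along a monotone line. -/
lemma core_sum {ι : Type*} (S : Finset ι) (X Y : ι → ℝ) (A B : ι → ℤ) (x y d e h X0 Y0 : ℝ)
    (hh : 0 < h) (hh4 : h ≤ 1 / 4)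
    (hd : 0 ≤ d) (he : 0 ≤ e) (hde : d + e = 1) (hx : |x| < 1) (hy : |y| < 1)
    (hX : ∀ c ∈ S, X c = X0 + h * A c) (hY : ∀ c ∈ S, Y c = Y0 + h * B c)
    (hinj : ∀ c ∈ S, ∀ c' ∈ S, A c = A c' → B c = B c' → c = c')
    (hX1 : ∀ c ∈ S, |X c| ≤ 1) (hY1 : ∀ c ∈ S, |Y c| ≤ 1)
    (hp : ∀ c ∈ S, ∃ s, |x + d * s| ≤ 1 ∧ |y + e * s| ≤ 1 ∧ |x + d * s - X c| < h / 2 ∧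
      |y + e * s - Y c| < h / 2) :
    ∑ c ∈ S, wgt (X c) (Y c) * h ≤ 81 / 50 + 1000 * h := by
  obtain ⟨a, b, hab, hxa, hya, hxb, hyb, hcon, hint⟩ := segment_bound x y d e hd he hde hx hy
  have hd1 : d ≤ 1 := by linarith
  have he1 : e ≤ 1 := by linarith
  have hab4 : b - a ≤ 4 := by
    rw [abs_le] at hxa hya hxb hyb
    have : b - a = (x + d * b - (x + d * a)) + (y + e * b - (y + e * a)) := by
      linear_combination (a - b) * hde
    linarith
  set f : ℝ → ℝ := fun s => wgt (x + d * s) (y + e * s) with hf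
  have hfc : Continuous f := by
    simp only [hf]; unfold wgt; fun_prop
  set z : ι → ℝ := fun c => X c + Y c - (x + y) with hz
  set I : ι → Set ℝ := fun c => Set.Ioc (z c - h / 2) (z c + h / 2) with hI
  choose! t ht using hp
  have htz : ∀ c ∈ S, |t c - z c| < h := by
    intro c hc
    obtain ⟨_, _, h3, h4⟩ := ht c hc
    have : t c - z c = (x + d * t c - X c) + (y + e * t c - Y c) := by
      simp only [hz]; linear_combination (-t c) * hde
    rw [this]
    exact (abs_add_le _ _).trans_lt (by linarith)
  have hIt : ∀ c ∈ S, ∀ s ∈ I c, |s - t c| ≤ 3 / 2 * h := by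
    intro c hc s hs
    have := htz c hc
    rw [abs_lt] at this
    rw [abs_le]
    obtain ⟨h1, h2⟩ := hs
    constructor <;> linarith
  have hdisj : (S : Set ι).PairwiseDisjoint I := by
    intro c hc c' hc' hne
    have hc := Finset.mem_coe.1 hc
    have hc' := Finset.mem_coe.1 hc'
    have hkey : A c + B c ≠ A c' + B c' := by
      intro heq
      obtain ⟨_, _, h3, h4⟩ := ht c hc
      obtain ⟨_, _, h3', h4'⟩ := ht c' hc'
      rw [abs_lt] at h3 h4 h3' h4'
      rw [hX c hc] at h3
      rw [hX c' hc'] at h3'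
      rw [hY c hc] at h4
      rw [hY c' hc'] at h4'
      have hR : (A c : ℝ) + B c = A c' + B c' := by exact_mod_cast heq
      rcases lt_trichotomy (A c) (A c') with hlt | heq' | hlt
      · have h5 : (A c : ℝ) + 1 ≤ A c' := by exact_mod_cast hlt
        have h6 : (B c' : ℝ) + 1 ≤ B c := by linarith
        have h7 := mul_le_mul_of_nonneg_left h5 hh.le
        have h8 := mul_le_mul_of_nonneg_left h6 hh.le
        have h9 : d * t c < d * t c' := by linarith
        have h10 : e * t c' < e * t c := by linarith
        have := lt_of_mul_lt_mul_left h9 hd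
        have := lt_of_mul_lt_mul_left h10 he
        linarith
      · exact hne (hinj c hc c' hc' heq' (by linarith))
      · have h5 : (A c' : ℝ) + 1 ≤ A c := by exact_mod_cast hlt
        have h6 : (B c : ℝ) + 1 ≤ B c' := by linarith
        have h7 := mul_le_mul_of_nonneg_left h5 hh.le
        have h8 := mul_le_mul_of_nonneg_left h6 hh.le
        have h9 : d * t c' < d * t c := by linarith
        have h10 : e * t c < e * t c' := by linarith
        have := lt_of_mul_lt_mul_left h9 hd
        have := lt_of_mul_lt_mul_left h10 he
        linarith
    have hzc : z c = h * (A c + B c : ℤ) + (X0 + Y0 - (x + y)) := by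
      simp only [hz]; rw [hX c hc, hY c hc]; push_cast; ring
    have hzc' : z c' = h * (A c' + B c' : ℤ) + (X0 + Y0 - (x + y)) := by
      simp only [hz]; rw [hX c' hc', hY c' hc']; push_cast; ring
    rw [Function.onFun, Set.disjoint_left]
    rintro s ⟨h1, h2⟩ ⟨h3, h4⟩
    rw [hzc] at h1 h2
    rw [hzc'] at h3 h4
    rcases lt_or_gt_of_ne hkey with hlt | hlt
    · have h5 : ((A c + B c : ℤ) : ℝ) + 1 ≤ (A c' + B c' : ℤ) := by exact_mod_cast hlt
      have h7 := mul_le_mul_of_nonneg_left h5 hh.le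
      linarith
    · have h5 : ((A c' + B c' : ℤ) : ℝ) + 1 ≤ (A c + B c : ℤ) := by exact_mod_cast hlt
      have h7 := mul_le_mul_of_nonneg_left h5 hh.le
      linarith
  have habs : ∀ u v p q : ℝ, 0 ≤ u → u ≤ 1 → |v + u * p| ≤ 1 → |q - p| ≤ 2 * h →
      |v + u * q| ≤ 2 ∧ |v + u * q - (v + u * p)| ≤ 2 * h := by
    intro u v p q hu hu1 h1 h2
    have h3 : |v + u * q - (v + u * p)| ≤ |q - p| := by
      have : v + u * q - (v + u * p) = u * (q - p) := by ring
      rw [this, abs_mul, abs_of_nonneg hu]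
      exact mul_le_of_le_one_left (abs_nonneg _) hu1
    have h4 := h3.trans h2
    refine ⟨?_, h4⟩
    rw [abs_le] at h1 h4 ⊢
    constructor <;> linarith
  -- points of the enlarged interval
  have hnear : ∀ s ∈ Set.Icc (a - 2 * h) (b + 2 * h), ∃ p, |x + d * p| ≤ 1 ∧ |y + e * p| ≤ 1 ∧
      |s - p| ≤ 2 * h := by
    intro s hs
    obtain ⟨h1, h2⟩ := hs
    rcases lt_or_ge s a with h3 | h3
    · exact ⟨a, hxa, hya, abs_le.2 ⟨by linarith, by linarith⟩⟩
    rcases lt_or_ge b s with h4 | h4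
    · exact ⟨b, hxb, hyb, abs_le.2 ⟨by linarith, by linarith⟩⟩
    · refine ⟨s, ?_, ?_, by simp; exact hh.le⟩
      · have e1 := mul_le_mul_of_nonneg_left h3 hd
        have e2 := mul_le_mul_of_nonneg_left h4 hd
        rw [abs_le] at hxa hxb ⊢
        constructor <;> linarith
      · have e1 := mul_le_mul_of_nonneg_left h3 he
        have e2 := mul_le_mul_of_nonneg_left h4 he
        rw [abs_le] at hya hyb ⊢
        constructor <;> linarith
  have hfnn : ∀ s ∈ Set.Icc (a - 2 * h) (b + 2 * h), 0 ≤ f s + 144 * h := by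
    intro s hs
    obtain ⟨p, h1, h2, h3⟩ := hnear s hs
    obtain ⟨k1, k2⟩ := habs d x p s hd hd1 h1 h3
    obtain ⟨k3, k4⟩ := habs e y p s he he1 h2 h3
    rw [abs_sub_comm] at k2 k4
    have := wgt_lip hh.le k1 (by linarith : |y + e * p| ≤ 2) (by linarith : |x + d * p| ≤ 2) k3 k2 k4
    exact (wgt_nonneg h1 h2).trans this
  have hfle : ∀ s ∈ Set.Icc (a - 2 * h) (b + 2 * h), f s ≤ 9 := by
    intro s hs
    obtain ⟨p, h1, h2, h3⟩ := hnear s hs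
    exact wgt_le (habs d x p s hd hd1 h1 h3).1 (habs e y p s he he1 h2 h3).1
  have hIsub : ∀ c ∈ S, I c ⊆ Set.Ioc (a - 2 * h) (b + 2 * h) := by
    intro c hc s hs
    have h1 := hIt c hc s hs
    obtain ⟨h2, h3⟩ := hcon (t c) (ht c hc).1 (ht c hc).2.1
    rw [abs_le] at h1
    exact ⟨by linarith, by linarith⟩
  have hgc : Continuous (fun s => f s + 144 * h) := hfc.add continuous_const
  have hcell : ∀ c ∈ S, wgt (X c) (Y c) * h ≤ ∫ s in I c, (f s + 144 * h) := by
    intro c hc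
    have hconst : ∫ s in I c, wgt (X c) (Y c) = wgt (X c) (Y c) * h := by
      rw [MeasureTheory.setIntegral_const]
      simp only [hI, Real.volume_real_Ioc, smul_eq_mul]
      rw [max_eq_left (by linarith)]
      ring
    rw [← hconst]
    apply MeasureTheory.setIntegral_mono_on
    · exact continuous_const.integrableOn_Ioc
    · exact hgc.integrableOn_Ioc
    · exact measurableSet_Ioc
    · intro s hs
      obtain ⟨h1, h2, h3, h4⟩ := ht c hc
      have h5 := hIt c hc s hs
      have h6 : ∀ u v C : ℝ, 0 ≤ u → u ≤ 1 → |v + u * t c - C| < h / 2 →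
          |C - (v + u * s)| ≤ 2 * h := by
        intro u v C hu hu1 hC
        have e1 : |u * (s - t c)| ≤ 3 / 2 * h := by
          rw [abs_mul, abs_of_nonneg hu]
          exact (mul_le_of_le_one_left (abs_nonneg _) hu1).trans h5
        rw [abs_lt] at hC
        rw [abs_le] at e1 ⊢
        constructor <;> linarith
      exact wgt_lip hh.le (habs d x (t c) s hd hd1 h1 (by linarith)).1
        ((hY1 c hc).trans (by norm_num)) ((hX1 c hc).trans (by norm_num))
        (habs e y (t c) s he he1 h2 (by linarith)).1 (h6 d x _ hd hd1 h3) (h6 e y _ he he1 h4)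
  have hsum : ∑ c ∈ S, wgt (X c) (Y c) * h ≤ ∫ s in (a - 2 * h)..(b + 2 * h), (f s + 144 * h) := by
    calc ∑ c ∈ S, wgt (X c) (Y c) * h ≤ ∑ c ∈ S, ∫ s in I c, (f s + 144 * h) :=
          Finset.sum_le_sum hcell
      _ = ∫ s in ⋃ c ∈ S, I c, (f s + 144 * h) := by
          rw [MeasureTheory.integral_biUnion_finset]
          · intro c _; exact measurableSet_Ioc
          · exact hdisj
          · intro c _; exact hgc.integrableOn_Ioc
      _ ≤ ∫ s in Set.Ioc (a - 2 * h) (b + 2 * h), (f s + 144 * h) := by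
          apply MeasureTheory.setIntegral_mono_set
          · exact hgc.integrableOn_Ioc
          · filter_upwards [MeasureTheory.ae_restrict_mem measurableSet_Ioc] with s hs
            exact hfnn s (Set.Ioc_subset_Icc_self hs)
          · exact (Set.iUnion₂_subset hIsub).eventuallyLE
      _ = _ := by rw [intervalIntegral.integral_of_le (by linarith)]
  have hfi : ∀ p q : ℝ, IntervalIntegrable f MeasureTheory.volume p q :=
    fun p q => hfc.intervalIntegrable p q
  have hsplit : ∫ s in (a - 2 * h)..(b + 2 * h), (f s + 144 * h) =
      (∫ s in (a - 2 * h)..a, f s) + (∫ s in a..b, f s) + (∫ s in b..(b + 2 * h), f s)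
        + (b - a + 4 * h) * (144 * h) := by
    rw [intervalIntegral.integral_add (hfi _ _) (by simp), intervalIntegral.integral_const,
      intervalIntegral.integral_add_adjacent_intervals (hfi _ _) (hfi _ _),
      intervalIntegral.integral_add_adjacent_intervals (hfi _ _) (hfi _ _), smul_eq_mul]
    ring
  have hend : ∀ p q : ℝ, a - 2 * h ≤ p → p ≤ q → q ≤ b + 2 * h → ∫ s in p..q, f s ≤ (q - p) * 9 := by
    intro p q h1 h2 h3
    have : ∫ s in p..q, (9 : ℝ) = (q - p) * 9 := by
      rw [intervalIntegral.integral_const, smul_eq_mul]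
    rw [← this]
    apply intervalIntegral.integral_mono_on h2 (hfi _ _) (by simp)
    intro s hs
    exact hfle s ⟨by linarith [hs.1], by linarith [hs.2]⟩
  have e1 := hend (a - 2 * h) a (by linarith) (by linarith) (by linarith)
  have e2 := hend b (b + 2 * h) (by linarith) (by linarith) (by linarith)
  rw [hsplit] at hsum
  have e3 : (b - a + 4 * h) * (144 * h) ≤ 5 * (144 * h) :=
    mul_le_mul_of_nonneg_right (by linarith) (by linarith)
  have hint' : ∫ s in a..b, f s ≤ 81 / 50 := hint
  linarith

/-- Direction of a line, up to reflection. -/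
lemma line_dir (a b x0 y0 : ℝ) (hab : (a, b) ≠ (0, 0)) :
    ∃ d e : ℝ, ∃ σ : ℤ, 0 ≤ d ∧ 0 ≤ e ∧ d + e = 1 ∧ (σ = 1 ∨ σ = -1) ∧
      ∀ x y : ℝ, a * x + b * y = a * x0 + b * y0 →
        ∃ s, x = x0 + d * s ∧ σ * y = σ * y0 + e * s := by
  have hab' : a ≠ 0 ∨ b ≠ 0 := by
    by_contra! hcon
    exact hab (by rw [hcon.1, hcon.2])
  have hD : 0 < |a| + |b| := by
    rcases hab' with h | h
    · have := abs_pos.2 h; positivity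
    · have := abs_pos.2 h; positivity
  have hD' := hD.ne'
  have hsum : |b| / (|a| + |b|) + |a| / (|a| + |b|) = 1 := by field_simp; ring
  have main : ∀ σ : ℤ, (σ = 1 ∨ σ = -1) →
      (∀ u v : ℝ, a * u + b * v = 0 → |a| * u = σ * (|b| * v)) →
      ∃ d e : ℝ, ∃ σ : ℤ, 0 ≤ d ∧ 0 ≤ e ∧ d + e = 1 ∧ (σ = 1 ∨ σ = -1) ∧
      ∀ x y : ℝ, a * x + b * y = a * x0 + b * y0 →
        ∃ s, x = x0 + d * s ∧ σ * y = σ * y0 + e * s := by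
    intro σ hσ huv
    refine ⟨|b| / (|a| + |b|), |a| / (|a| + |b|), σ, by positivity, by positivity, hsum, hσ, ?_⟩
    intro x y hxy
    have h1 := huv (x - x0) (y - y0) (by linarith)
    refine ⟨(x - x0) + σ * (y - y0), ?_, ?_⟩
    · field_simp
      linear_combination h1
    · field_simp
      linear_combination -h1
  rcases le_total 0 a with ha | ha <;> rcases le_total 0 b with hb | hb
  · apply main (-1) (Or.inr rfl)
    intro u v h
    rw [abs_of_nonneg ha, abs_of_nonneg hb]; push_cast; linarith
  · apply main 1 (Or.inl rfl)
    intro u v h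
    rw [abs_of_nonneg ha, abs_of_nonpos hb]; push_cast; linarith
  · apply main 1 (Or.inl rfl)
    intro u v h
    rw [abs_of_nonpos ha, abs_of_nonneg hb]; push_cast; linarith
  · apply main (-1) (Or.inr rfl)
    intro u v h
    rw [abs_of_nonpos ha, abs_of_nonpos hb]; push_cast; linarith

/-- Centre coordinate of the `i`-th column. -/
noncomputable def ctr (n i : ℕ) : ℝ := -1 - 1 / n + 2 / n * i

lemma ctr_bounds {n i : ℕ} (hn : 0 < n) (hi : i ∈ Finset.Icc 1 n) :
    -1 + 1 / (n : ℝ) ≤ ctr n i ∧ ctr n i ≤ 1 - 1 / n := by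
  rw [Finset.mem_Icc] at hi
  have h1 : (1 : ℝ) ≤ i := by exact_mod_cast hi.1
  have h2 : (i : ℝ) ≤ n := by exact_mod_cast hi.2
  have hn' : (0 : ℝ) < n := by exact_mod_cast hn
  unfold ctr
  have e1 : 2 / (n : ℝ) * 1 ≤ 2 / n * i := by gcongr
  have e2 : 2 / (n : ℝ) * i ≤ 2 / n * n := by gcongr
  have e3 : 2 / (n : ℝ) * n = 2 := by field_simp
  have e4 : 2 / (n : ℝ) = 2 * (1 / n) := by ring
  constructor <;> linarith

lemma mem_interior_cell {n i j : ℕ} {p : ℝ × ℝ} (hp : p ∈ interior (cell n i j)) :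
    |p.1 - ctr n i| < 2 / n / 2 ∧ |p.2 - ctr n j| < 2 / n / 2 := by
  unfold cell at hp
  rw [interior_prod_eq, interior_Icc, interior_Icc] at hp
  obtain ⟨⟨h1, h2⟩, h3, h4⟩ := hp
  have e4 : 2 / (n : ℝ) = 2 * (1 / n) := by ring
  unfold ctr
  rw [abs_lt, abs_lt]
  refine ⟨⟨?_, ?_⟩, ?_, ?_⟩ <;> linarith

lemma line_sum {n : ℕ} (hn : 8 ≤ n) {L : Set (ℝ × ℝ)} (hL : IsLine L) :
    ∑ c ∈ (Idx n).filter (fun c => Pierces L (cell n c.1 c.2)), wgt (ctr n c.1) (ctr n c.2) * (2 / n)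
      ≤ 81 / 50 + 1000 * (2 / n) := by
  have hn0 : 0 < n := by omega
  have hnR : (8 : ℝ) ≤ n := by exact_mod_cast hn
  have hnR0 : (0 : ℝ) < n := by linarith
  have hh : 0 < 2 / (n : ℝ) := by positivity
  have hh4 : 2 / (n : ℝ) ≤ 1 / 4 := by
    rw [div_le_div_iff₀ hnR0 (by norm_num)]; linarith
  obtain ⟨a, b, k, hab, rfl⟩ := hL
  set S := (Idx n).filter (fun c => Pierces {p : ℝ × ℝ | a * p.1 + b * p.2 = k} (cell n c.1 c.2))
    with hS
  have e4 : 2 / (n : ℝ) / 2 = 1 / n := by ring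
  have hpt : ∀ c ∈ S, ∃ x y : ℝ, a * x + b * y = k ∧ |x - ctr n c.1| < 2 / n / 2 ∧
      |y - ctr n c.2| < 2 / n / 2 ∧ |x| < 1 ∧ |y| < 1 ∧ |ctr n c.1| ≤ 1 ∧ |ctr n c.2| ≤ 1 := by
    intro c hc
    rw [hS, Finset.mem_filter] at hc
    obtain ⟨hc1, p, hp, hp2⟩ := hc
    obtain ⟨h1, h2⟩ := mem_interior_cell hp2
    rw [Idx, Finset.mem_product] at hc1
    obtain ⟨b1, b2⟩ := ctr_bounds hn0 hc1.1
    obtain ⟨b3, b4⟩ := ctr_bounds hn0 hc1.2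
    refine ⟨p.1, p.2, hp, h1, h2, ?_⟩
    rw [e4, abs_lt] at h1 h2
    have : 0 < 1 / (n : ℝ) := by positivity
    refine ⟨?_, ?_, ?_, ?_⟩
    · rw [abs_lt]; constructor <;> linarith
    · rw [abs_lt]; constructor <;> linarith
    · rw [abs_le]; constructor <;> linarith
    · rw [abs_le]; constructor <;> linarith
  rcases S.eq_empty_or_nonempty with hE | ⟨c0, hc0⟩
  · rw [hE, Finset.sum_empty]; positivity
  obtain ⟨x0, y0, hk, _, _, hx0, hy0, _, _⟩ := hpt c0 hc0
  obtain ⟨d, e, σ, hd, he, hde, hσ, hdir⟩ := line_dir a b x0 y0 hab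
  have hσR : (σ : ℝ) = 1 ∨ (σ : ℝ) = -1 := by
    rcases hσ with h | h
    · left; rw [h]; norm_num
    · right; rw [h]; norm_num
  have hσabs : ∀ u : ℝ, |(σ : ℝ) * u| = |u| := by
    intro u
    rcases hσR with h | h <;> rw [h] <;> simp
  have hσw : ∀ u v : ℝ, wgt u (σ * v) = wgt u v := by
    intro u v
    unfold wgt
    rcases hσR with h | h <;> rw [h] <;> ring
  have := core_sum S (fun c => ctr n c.1) (fun c => σ * ctr n c.2) (fun c => (c.1 : ℤ))
    (fun c => σ * (c.2 : ℤ)) x0 (σ * y0) d e (2 / n) (-1 - 1 / n) (σ * (-1 - 1 / n)) hh hh4 hd he hde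
    hx0 (by rw [hσabs]; exact hy0) (fun c _ => by simp [ctr])
    (fun c _ => by simp only [ctr]; push_cast; ring)
    (by
      intro c _ c' _ h1 h2
      have h1' : c.1 = c'.1 := by exact_mod_cast h1
      have h2' : c.2 = c'.2 := by
        rcases hσ with h | h <;> rw [h] at h2 <;> omega
      exact Prod.ext h1' h2')
    (fun c hc => by obtain ⟨_, _, _, _, _, _, _, h, _⟩ := hpt c hc; exact h)
    (fun c hc => by obtain ⟨_, _, _, _, _, _, _, _, h⟩ := hpt c hc; simp only [hσabs]; exact h)
    (by
      intro c hc
      obtain ⟨x, y, h1, h2, h3, h4, h5, _, _⟩ := hpt c hc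
      obtain ⟨s, hs1, hs2⟩ := hdir x y (h1.trans hk.symm)
      refine ⟨s, ?_, ?_, ?_, ?_⟩
      · rw [← hs1]; exact h4.le
      · rw [← hs2, hσabs]; exact h5.le
      · rw [← hs1]; exact h2
      · rw [← hs2, ← mul_sub, hσabs]; exact h3)
  simpa only [hσw] using this

lemma sum_nat_Icc (n : ℕ) : ∑ i ∈ Finset.Icc 1 n, (i : ℝ) = n * (n + 1) / 2 := by
  induction n with
  | zero => simp
  | succ m ih => rw [Finset.sum_Icc_succ_top (by omega), ih]; push_cast; ring

lemma sum_sq_Icc (n : ℕ) : ∑ i ∈ Finset.Icc 1 n, (i : ℝ) ^ 2 = n * (n + 1) * (2 * n + 1) / 6 := by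
  induction n with
  | zero => simp
  | succ m ih => rw [Finset.sum_Icc_succ_top (by omega), ih]; push_cast; ring

lemma sum_ctr_sq {n : ℕ} (hn : 0 < n) :
    ∑ i ∈ Finset.Icc 1 n, ctr n i ^ 2 = (n : ℝ) / 3 - 1 / (3 * n) := by
  have hn' : (n : ℝ) ≠ 0 := by positivity
  have : ∀ i : ℕ, ctr n i ^ 2 = (1 + 1 / (n : ℝ)) ^ 2 - 2 * (1 + 1 / (n : ℝ)) * (2 / n) * i
      + (2 / n) ^ 2 * (i : ℝ) ^ 2 := by
    intro i; unfold ctr; ring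
  simp_rw [this]
  rw [Finset.sum_add_distrib, Finset.sum_sub_distrib, ← Finset.mul_sum, ← Finset.mul_sum,
    sum_nat_Icc, sum_sq_Icc, Finset.sum_const, Nat.card_Icc]
  simp only [Nat.add_sub_cancel, nsmul_eq_mul]
  field_simp
  ring

lemma total_sum {n : ℕ} (hn : 0 < n) :
    49 / 90 * (n : ℝ) ^ 2 - 1 ≤ ∑ c ∈ Idx n, wgt (ctr n c.1) (ctr n c.2) := by
  have hn' : (0 : ℝ) < n := by exact_mod_cast hn
  have hn1 : (1 : ℝ) ≤ n := by exact_mod_cast hn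
  set Q := ∑ i ∈ Finset.Icc 1 n, ctr n i ^ 2 with hQ
  have h1 : ∑ c ∈ Idx n, wgt (ctr n c.1) (ctr n c.2) = (n : ℝ) ^ 2 / 10 + 2 * n * Q - 2 * Q ^ 2 := by
    unfold Idx
    rw [Finset.sum_product]
    have : ∀ i ∈ Finset.Icc 1 n, ∑ j ∈ Finset.Icc 1 n, wgt (ctr n i) (ctr n j) =
        n / 10 + Q + (n - 2 * Q) * ctr n i ^ 2 := by
      intro i _
      have : ∀ j : ℕ, wgt (ctr n i) (ctr n j) =
          (1 / 10 + ctr n i ^ 2) + (1 - 2 * ctr n i ^ 2) * ctr n j ^ 2 := by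
        intro j; unfold wgt; ring
      simp_rw [this]
      rw [Finset.sum_add_distrib, ← Finset.mul_sum, Finset.sum_const, Nat.card_Icc, ← hQ]
      simp only [Nat.add_sub_cancel, nsmul_eq_mul]
      ring
    rw [Finset.sum_congr rfl this, Finset.sum_add_distrib, ← Finset.mul_sum, Finset.sum_const,
      Nat.card_Icc, ← hQ]
    simp only [Nat.add_sub_cancel, nsmul_eq_mul]
    ring
  rw [h1, hQ, sum_ctr_sq hn]
  have h2 : (n : ℝ) ^ 2 / 10 + 2 * n * (n / 3 - 1 / (3 * n)) - 2 * (n / 3 - 1 / (3 * n)) ^ 2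
      = 49 / 90 * (n : ℝ) ^ 2 - 2 / 9 - 2 / 9 * (1 / n) ^ 2 := by
    field_simp
    ring
  rw [h2]
  have h3 : 1 / (n : ℝ) ≤ 1 := by rw [div_le_one hn']; exact hn1
  have h4 : (0 : ℝ) ≤ 1 / n := by positivity
  nlinarith

lemma card_bound {n : ℕ} (hn : 1000000 ≤ n) (F : Finset (Set (ℝ × ℝ))) (hF : ∀ L ∈ F, IsLine L)
    (hP : ∀ ij ∈ Idx n, ∃ L ∈ F, Pierces L (cell n ij.1 ij.2)) :
    2 / 3 * (n : ℝ) < F.card := by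
  have hn0 : 0 < n := by omega
  have hnR : (1000000 : ℝ) ≤ n := by exact_mod_cast hn
  have hn' : (0 : ℝ) < n := by linarith
  have hw : ∀ c ∈ Idx n, 0 ≤ wgt (ctr n c.1) (ctr n c.2) * (2 / n) := by
    intro c hc
    rw [Idx, Finset.mem_product] at hc
    obtain ⟨b1, b2⟩ := ctr_bounds hn0 hc.1
    obtain ⟨b3, b4⟩ := ctr_bounds hn0 hc.2
    have h0 : 0 < 1 / (n : ℝ) := by positivity
    have := wgt_nonneg (x := ctr n c.1) (y := ctr n c.2)
      (by rw [abs_le]; constructor <;> linarith) (by rw [abs_le]; constructor <;> linarith)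
    positivity
  have h1 : ∑ c ∈ Idx n, wgt (ctr n c.1) (ctr n c.2) * (2 / n) ≤
      ∑ L ∈ F, ∑ c ∈ (Idx n).filter (fun c => Pierces L (cell n c.1 c.2)),
        wgt (ctr n c.1) (ctr n c.2) * (2 / n) := by
    simp_rw [Finset.sum_filter]
    rw [Finset.sum_comm]
    apply Finset.sum_le_sum
    intro c hc
    obtain ⟨L, hL, hLc⟩ := hP c hc
    have := Finset.single_le_sum (f := fun L => if Pierces L (cell n c.1 c.2) then
      wgt (ctr n c.1) (ctr n c.2) * (2 / (n : ℝ)) else 0) (s := F)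
      (fun L _ => by
        show 0 ≤ if Pierces L (cell n c.1 c.2) then _ else _
        split_ifs
        · exact hw c hc
        · exact le_rfl) hL
    simpa only [if_pos hLc] using this
  have h2 := h1.trans (Finset.sum_le_sum (fun L hL => line_sum (by omega : 8 ≤ n) (hF L hL)))
  rw [Finset.sum_const, nsmul_eq_mul, ← Finset.sum_mul] at h2
  have h3 := mul_le_mul_of_nonneg_right (total_sum hn0) (by positivity : 0 ≤ 2 / (n : ℝ))
  have h4 := h3.trans h2
  have hinv : 1 / (n : ℝ) ≤ 1 / 1000000 := one_div_le_one_div_of_le (by norm_num) hnR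
  have h5 : (49 / 90 * (n : ℝ) ^ 2 - 1) * (2 / n) = 49 / 45 * n - 2 * (1 / n) := by
    field_simp
    ring
  have h6 : 2 / (n : ℝ) = 2 * (1 / n) := by ring
  rw [h5, h6] at h4
  have h7 : (F.card : ℝ) * (81 / 50 + 1000 * (2 * (1 / n))) ≤ F.card * (1622 / 1000) := by
    apply mul_le_mul_of_nonneg_left _ (Nat.cast_nonneg _)
    linarith
  linarith

/-- For large `n`, `p_n > 2n/3 - 1`; more precisely `p_n > (2/3 - ε)n` eventually. -/
theorem piercing_lower_two_thirds :
    (∃ N : ℕ, ∀ n ≥ N, ∀ F : Finset (Set (ℝ × ℝ)), (∀ L ∈ F, IsLine L) →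
      (∀ ij ∈ Idx n, ∃ L ∈ F, Pierces L (cell n ij.1 ij.2)) →
      2 * (n : ℝ) / 3 - 1 < F.card) ∧
    (∀ ε : ℝ, 0 < ε → ∃ N : ℕ, ∀ n ≥ N, ∀ F : Finset (Set (ℝ × ℝ)),
      (∀ L ∈ F, IsLine L) →
      (∀ ij ∈ Idx n, ∃ L ∈ F, Pierces L (cell n ij.1 ij.2)) →
      (2 / 3 - ε) * n < F.card) := by
  constructor
  · refine ⟨1000000, fun n hn F hF hP => ?_⟩
    have := card_bound hn F hF hP
    linarith
  · intro ε hε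
    refine ⟨1000000, fun n hn F hF hP => ?_⟩
    have := card_bound hn F hF hP
    have h2 : 0 ≤ ε * n := by positivity
    linarith
end
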